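/- Let p be a prime, q a power of p. Let w be a real number with w > (5+√17)/2 if p ≠ 2 and w > (9+√65)/2 if p = 2. Let b, c ∈ F_q[T] be distinct polynomials of degree at least one. Define a_{n,w} = c if n = ⌊w^i⌋ for some integer i ≥ 0, and a_{n,w} = b otherwise, and set ξ_w := [0, a_{1,w}, a_{2,w}, …] ∈ F_q((T^{-1})). Then w_2*(ξ_w) = w − 1 and w_2(ξ_w) = w. -/

import Mathlib

open Polynomial Filter
open scoped ENNReal

noncomputable section

namespace Ooto

variable (Fq : Type) [Field Fq] [Fintype Fq]

/-- `F_q((T⁻¹))`, realized as formal Laurent series in the variable `X = T⁻¹`. -/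
abbrev K := LaurentSeries Fq

/-- The element `T = X⁻¹` of `F_q((T⁻¹))`. -/
def TT : K Fq := HahnSeries.single (-1 : ℤ) (1 : Fq)

/-- The natural embedding of `F_q[T]` into `F_q((T⁻¹))`, sending `T` to `T`. -/
def polyToK : Polynomial Fq →+* K Fq := Polynomial.eval₂RingHom HahnSeries.C (TT Fq)

open Classical in
/-- The absolute value on `F_q((T⁻¹))`: `|0| = 0` and `|ξ| = q^{-N}` where `N` is the order
of `ξ` as a series in `T⁻¹`. -/
def kabs (f : K Fq) : ℝ := if f = 0 then 0 else (Fintype.card Fq : ℝ) ^ (-f.order)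

/-- A fixed algebraic closure of `F_q((T⁻¹))`. -/
abbrev L := AlgebraicClosure (K Fq)

def toL : K Fq →+* L Fq := algebraMap (K Fq) (L Fq)

def φ : Polynomial Fq →+* L Fq := (toL Fq).comp (polyToK Fq)

/-- Evaluation of `P ∈ (F_q[T])[X]` at `ξ ∈ F_q((T⁻¹))`. -/
def evalK (P : Polynomial (Polynomial Fq)) (ξ : K Fq) : K Fq :=
  Polynomial.eval₂ (polyToK Fq) ξ P

/-- Evaluation of `P ∈ (F_q[T])[X]` at a point of the algebraic closure. -/
def evalL (P : Polynomial (Polynomial Fq)) (α : L Fq) : L Fq :=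
  Polynomial.eval₂ (φ Fq) α P

/-- Height of a polynomial over `F_q[T]`: the maximum of the absolute values of its
coefficients. -/
def Hpoly (P : Polynomial (Polynomial Fq)) : ℝ := ⨆ i : ℕ, kabs Fq (polyToK Fq (P.coeff i))

/-- `P` is the minimal polynomial of `α`: a non-constant irreducible primitive polynomial in
`(F_q[T])[X]` whose leading coefficient is monic in `T`, vanishing at `α`. -/
def IsMinPolyOf (P : Polynomial (Polynomial Fq)) (α : L Fq) : Prop :=
  0 < P.natDegree ∧ Irreducible P ∧ P.IsPrimitive ∧ (P.leadingCoeff).Monic ∧ evalL Fq P α = 0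

/-- `α` is algebraic over `F_q(T)`. -/
def IsAlgElem (α : L Fq) : Prop := ∃ P, IsMinPolyOf Fq P α

open Classical in
/-- The minimal polynomial of an algebraic element (junk value `0` otherwise). -/
def minPolyPrim (α : L Fq) : Polynomial (Polynomial Fq) :=
  if h : IsAlgElem Fq α then h.choose else 0

/-- Degree of an algebraic element. -/
def degAlg (α : L Fq) : ℕ := (minPolyPrim Fq α).natDegree

/-- Height of an algebraic element. -/
def heightAlg (α : L Fq) : ℝ := Hpoly Fq (minPolyPrim Fq α)

/-- Inseparable degree of a polynomial `P ∈ (F_q[T])[X]`: the largest power `f = p^j` of the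
characteristic such that `P(X) = R(X^f)` for some `R`. -/
def insepDeg (P : Polynomial (Polynomial Fq)) : ℕ :=
  (ringChar Fq) ^ sSup {j : ℕ | ∃ R : Polynomial (Polynomial Fq),
    P = R.comp (Polynomial.X ^ (ringChar Fq) ^ j)}

/-- Inseparable degree of an algebraic element. -/
def insepAlg (α : L Fq) : ℕ := insepDeg Fq (minPolyPrim Fq α)

/-- `α'` is the Galois conjugate of the quadratic element `α` (equal to `α` itself in the
inseparable case): the minimal polynomial of `α` factors as `A(X - α)(X - α')`. -/
def IsConjOf (α' α : L Fq) : Prop :=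
  (minPolyPrim Fq α).natDegree = 2 ∧
  (minPolyPrim Fq α).map (φ Fq) =
    Polynomial.C (φ Fq (minPolyPrim Fq α).leadingCoeff) *
      (Polynomial.X - Polynomial.C α) * (Polynomial.X - Polynomial.C α')

/-- `v` is an absolute value on the algebraic closure of `F_q((T⁻¹))` extending `kabs`
(such an extension exists and is unique). -/
structure IsAbsExt (v : L Fq → ℝ) : Prop where
  eq_zero_iff : ∀ x, v x = 0 ↔ x = 0
  map_mul : ∀ x y, v (x * y) = v x * v y
  add_le : ∀ x y, v (x + y) ≤ max (v x) (v y)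
  nonneg : ∀ x, 0 ≤ v x
  extends_kabs : ∀ f : K Fq, v (toL Fq f) = kabs Fq f

/-- The exponent `w_n(ξ)`: the supremum of the real numbers `w` such that
`0 < |P(ξ)| ≤ H(P)^{-w}` for infinitely many `P ∈ (F_q[T])[X]` of degree at most `n`. -/
def wExp (n : ℕ) (ξ : K Fq) : EReal :=
  sSup {x : EReal | ∃ w : ℝ, x = (w : EReal) ∧
    {P : Polynomial (Polynomial Fq) | P.natDegree ≤ n ∧ 0 < kabs Fq (evalK Fq P ξ) ∧
      kabs Fq (evalK Fq P ξ) ≤ Hpoly Fq P ^ (-w)}.Infinite}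

/-- The exponent `w_n^*(ξ)`: the supremum of the real numbers `w` such that
`0 < |ξ - α| ≤ H(α)^{-w-1}` for infinitely many algebraic `α` of degree at most `n`. -/
def wStarExp (v : L Fq → ℝ) (n : ℕ) (ξ : K Fq) : EReal :=
  sSup {x : EReal | ∃ w : ℝ, x = (w : EReal) ∧
    {α : L Fq | IsAlgElem Fq α ∧ degAlg Fq α ≤ n ∧ 0 < v (toL Fq ξ - α) ∧
      v (toL Fq ξ - α) ≤ heightAlg Fq α ^ (-w - 1)}.Infinite}

/-- `pSeq a n = p_{n-1}`, the numerators of the convergents of `[a 0; a 1, a 2, …]`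
(with `p_{-1} = 1`). -/
def pSeq (a : ℕ → Polynomial Fq) : ℕ → Polynomial Fq
  | 0 => 1
  | 1 => a 0
  | (n+2) => a (n+1) * pSeq a (n+1) + pSeq a n

/-- `qSeq a n = q_{n-1}`, the denominators of the convergents of `[a 0; a 1, a 2, …]`
(with `q_{-1} = 0`). -/
def qSeq (a : ℕ → Polynomial Fq) : ℕ → Polynomial Fq
  | 0 => 0
  | 1 => 1
  | (n+2) => a (n+1) * qSeq a (n+1) + qSeq a n

/-- `ξ` has continued fraction expansion `[a 0; a 1, a 2, …]`: each partial quotient `a n`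
(`n ≥ 1`) has degree at least one and `|ξ - p_n/q_n| = |q_n|⁻¹|q_{n+1}|⁻¹` for all `n ≥ 0`. -/
def IsCFOf (ξ : K Fq) (a : ℕ → Polynomial Fq) : Prop :=
  (∀ n, 1 ≤ n → 1 ≤ (a n).natDegree) ∧
  ∀ n : ℕ,
    kabs Fq (ξ - polyToK Fq (pSeq Fq a (n+1)) / polyToK Fq (qSeq Fq a (n+1))) =
      (kabs Fq (polyToK Fq (qSeq Fq a (n+1))) * kabs Fq (polyToK Fq (qSeq Fq a (n+2))))⁻¹

/-- The sequence of partial quotients of `[0; b 0, b 1, b 2, …]`. -/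
def cfA (b : ℕ → Polynomial Fq) : ℕ → Polynomial Fq := fun n => if n = 0 then 0 else b (n - 1)

/-- `qden b n` is the denominator `q_n` of the `n`-th convergent of `[0; b 0, b 1, …]`. -/
def qden (b : ℕ → Polynomial Fq) (n : ℕ) : Polynomial Fq := qSeq Fq (cfA Fq b) (n + 1)

/-- `V^w` for a finite word `V` and a real `w ≥ 0`: `⌊w⌋` copies of `V` followed by the prefix
of `V` of length `⌈(w - ⌊w⌋)|V|⌉`. -/
def wordPow {A : Type*} (V : List A) (w : ℝ) : List A :=
  (List.replicate ⌊w⌋₊ V).flatten ++ V.take ⌈(w - ⌊w⌋₊) * V.length⌉₊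

/-- The finite word `l` is a prefix of the infinite word `b`. -/
def IsPrefixOfSeq {A : Type*} (l : List A) (b : ℕ → A) : Prop :=
  ∀ (i : ℕ) (h : i < l.length), l.get ⟨i, h⟩ = b i

/-- Condition `(*)_ρ` for an infinite word. -/
def SatisfiesCond {A : Type*} (b : ℕ → A) (ρ : ℝ) : Prop :=
  ∃ (U V : ℕ → List A) (w : ℕ → ℝ),
    (∀ n, V n ≠ []) ∧ (∀ n, 0 ≤ w n) ∧
    (∀ n, IsPrefixOfSeq (U n ++ wordPow (V n) (w n)) b) ∧
    (∀ n, ρ * (((U n).length + (V n).length : ℕ) : ℝ) ≤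
      (((U n).length + (wordPow (V n) (w n)).length : ℕ) : ℝ)) ∧
    StrictMono fun n => (wordPow (V n) (w n)).length

/-- The Diophantine exponent of an infinite word: the supremum of the `ρ` such that the word
satisfies Condition `(*)_ρ`. -/
def dioExp {A : Type*} (b : ℕ → A) : EReal :=
  sSup {x : EReal | ∃ ρ : ℝ, x = (ρ : EReal) ∧ SatisfiesCond b ρ}

/-- The complexity function: the number of distinct blocks of `n` consecutive letters. -/
def complexity {A : Type*} (b : ℕ → A) (n : ℕ) : ℕ∞ :=
  {w : Fin n → A | ∃ i : ℕ, ∀ k : Fin n, w k = b (i + k)}.encard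

/-- The infinite word `b` is ultimately periodic. -/
def UltimatelyPeriodic {A : Type*} (b : ℕ → A) : Prop :=
  ∃ N T : ℕ, 0 < T ∧ ∀ n, N ≤ n → b (n + T) = b n


section Helpers

set_option linter.unusedSectionVars false
set_option linter.unusedSimpArgs false
set_option linter.unusedVariables false

variable {Fq} {v : L Fq → ℝ}

theorem v_zero (hv : IsAbsExt Fq v) : v 0 = 0 := (hv.eq_zero_iff 0).2 rfl

theorem v_pos (hv : IsAbsExt Fq v) {x : L Fq} (hx : x ≠ 0) : 0 < v x :=
  lt_of_le_of_ne (hv.nonneg x) (fun h => hx ((hv.eq_zero_iff x).1 h.symm))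

theorem v_one (hv : IsAbsExt Fq v) : v 1 = 1 := by
  have h := hv.map_mul 1 1
  have h1 := v_pos hv (one_ne_zero (α := L Fq))
  rw [mul_one] at h
  nlinarith

theorem v_neg (hv : IsAbsExt Fq v) (x : L Fq) : v (-x) = v x := by
  have h := hv.map_mul x x
  have h2 := hv.map_mul (-x) (-x)
  rw [neg_mul_neg] at h2
  have h3 := hv.nonneg x
  have h4 := hv.nonneg (-x)
  have : v (-x) * v (-x) = v x * v x := by rw [← h, ← h2]
  exact (mul_self_inj_of_nonneg h4 h3).1 this

theorem v_sub_le (hv : IsAbsExt Fq v) (x y : L Fq) : v (x - y) ≤ max (v x) (v y) := by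
  have := hv.add_le x (-y)
  rwa [v_neg hv, ← sub_eq_add_neg] at this

theorem v_add_eq (hv : IsAbsExt Fq v) {x y : L Fq} (h : v x < v y) : v (x + y) = v y := by
  apply le_antisymm
  · exact (hv.add_le x y).trans (by rw [max_eq_right h.le])
  · have := v_sub_le hv (x + y) x
    rw [add_sub_cancel_left] at this
    rcases le_max_iff.1 this with h1 | h1
    · exact h1
    · linarith

theorem v_add_lt (hv : IsAbsExt Fq v) {x y : L Fq} {r : ℝ} (h : v x < r) (h' : v y < r) :
    v (x + y) < r := (hv.add_le x y).trans_lt (max_lt h h')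

theorem v_sub_lt (hv : IsAbsExt Fq v) {x y : L Fq} {r : ℝ} (h : v x < r) (h' : v y < r) :
    v (x - y) < r := (v_sub_le hv x y).trans_lt (max_lt h h')

theorem v_add_le' (hv : IsAbsExt Fq v) {x y : L Fq} {r : ℝ} (h : v x ≤ r) (h' : v y ≤ r) :
    v (x + y) ≤ r := (hv.add_le x y).trans (max_le h h')

theorem v_sub_le' (hv : IsAbsExt Fq v) {x y : L Fq} {r : ℝ} (h : v x ≤ r) (h' : v y ≤ r) :
    v (x - y) ≤ r := (v_sub_le hv x y).trans (max_le h h')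

variable (Fq) in
/-- cardinality of the finite field as a real number -/
def QQ : ℝ := (Fintype.card Fq : ℝ)

variable (Fq) in
theorem QQ_gt : 1 < QQ Fq := by
  unfold QQ
  exact_mod_cast Fintype.one_lt_card

variable (Fq) in
theorem QQ_pos : 0 < QQ Fq := lt_trans one_pos (QQ_gt Fq)

theorem v_T (hv : IsAbsExt Fq v) : v (φ Fq X) = QQ Fq := by
  have : φ Fq X = toL Fq (TT Fq) := by simp [φ, polyToK]
  rw [this, hv.extends_kabs]
  have h1 : (TT Fq) ≠ 0 := by
    unfold TT
    exact HahnSeries.single_ne_zero one_ne_zero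
  unfold kabs
  rw [if_neg h1]
  unfold TT
  rw [HahnSeries.order_single one_ne_zero]
  simp [QQ]

theorem v_C (hv : IsAbsExt Fq v) {x : Fq} (hx : x ≠ 0) : v (φ Fq (C x)) = 1 := by
  have : φ Fq (C x) = toL Fq (HahnSeries.C x) := by simp [φ, polyToK]
  rw [this, hv.extends_kabs]
  have h1 : (HahnSeries.C x : K Fq) ≠ 0 := HahnSeries.C_ne_zero hx
  unfold kabs
  rw [if_neg h1, HahnSeries.order_C]
  simp

theorem v_pow (hv : IsAbsExt Fq v) (x : L Fq) (n : ℕ) : v (x ^ n) = v x ^ n := by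
  induction n with
  | zero => simp [v_one hv]
  | succ n ih => rw [pow_succ, hv.map_mul, ih, pow_succ]

theorem v_phi_le (hv : IsAbsExt Fq v) (P : Fq[X]) (n : ℕ) (hn : P.natDegree ≤ n) :
    v (φ Fq P) ≤ QQ Fq ^ n := by
  have hQ := QQ_gt Fq
  rw [P.as_sum_range_C_mul_X_pow, map_sum]
  have hgen : ∀ s : Finset ℕ, (∀ i ∈ s, i ≤ n) →
      v (∑ i ∈ s, φ Fq (C (P.coeff i) * X ^ i)) ≤ QQ Fq ^ n := by
    intro s
    induction s using Finset.induction_on with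
    | empty => intro _; rw [Finset.sum_empty, v_zero hv]; exact pow_nonneg (QQ_pos Fq).le _
    | insert i s hi ih =>
      intro h
      rw [Finset.sum_insert hi]
      refine v_add_le' hv ?_ (ih fun j hj => h j (Finset.mem_insert_of_mem hj))
      rw [map_mul, map_pow, hv.map_mul, v_pow hv, v_T hv]
      by_cases h0 : P.coeff i = 0
      · rw [h0, map_zero, map_zero, v_zero hv, zero_mul]; exact pow_nonneg (QQ_pos Fq).le _
      · rw [v_C hv h0, one_mul]
        exact pow_le_pow_right₀ hQ.le (h i (Finset.mem_insert_self _ _))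
  apply hgen
  intro i hi
  have := Finset.mem_range.1 hi
  omega

theorem v_phi (hv : IsAbsExt Fq v) {P : Fq[X]} (hP : P ≠ 0) :
    v (φ Fq P) = QQ Fq ^ P.natDegree := by
  have hl : v (φ Fq (C P.leadingCoeff * X ^ P.natDegree)) = QQ Fq ^ P.natDegree := by
    rw [map_mul, map_pow, hv.map_mul, v_pow hv, v_T hv,
      v_C hv (leadingCoeff_ne_zero.2 hP), one_mul]
  rw [← P.eraseLead_add_C_mul_X_pow, map_add, v_add_eq hv, hl, P.eraseLead_add_C_mul_X_pow]
  rw [hl]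
  by_cases h0 : P.eraseLead = 0
  · rw [h0, map_zero, v_zero hv]; exact pow_pos (QQ_pos Fq) _
  by_cases h1 : P.natDegree = 0
  · exfalso; apply h0
    rw [natDegree_eq_zero.1 h1 |>.choose_spec.symm]; simp
  · calc _ ≤ QQ Fq ^ (P.natDegree - 1) := v_phi_le hv _ _ (eraseLead_natDegree_le P)
      _ < _ := pow_lt_pow_right₀ (QQ_gt Fq) (by omega)

theorem v_phi_ge (hv : IsAbsExt Fq v) {P : Fq[X]} (hP : P ≠ 0) : 1 ≤ v (φ Fq P) := by
  rw [v_phi hv hP]; exact one_le_pow₀ (QQ_gt Fq).le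

theorem phi_inj (hv : IsAbsExt Fq v) : Function.Injective (φ Fq) := by
  rw [injective_iff_map_eq_zero]
  intro P h
  by_contra hP
  have := v_phi_ge hv hP
  rw [h, v_zero hv] at this
  linarith

theorem aniso {b : Fq[X]} (hb : 1 ≤ b.natDegree) {u z : Fq[X]}
    (h : u ^ 2 + b * u * z - z ^ 2 = 0) : u = 0 ∧ z = 0 := by
  classical
  by_cases hz : z = 0
  · subst hz
    refine ⟨?_, rfl⟩
    have : u ^ 2 = 0 := by linear_combination h
    exact pow_eq_zero_iff (two_ne_zero) |>.1 this
  exfalso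
  have hex : ∃ g u' z' : Fq[X], g ≠ 0 ∧ u = g * u' ∧ z = g * z' ∧ IsCoprime u' z' := by
    let _ := EuclideanDomain.gcdMonoid Fq[X]
    have hg : GCDMonoid.gcd u z ≠ 0 := fun h0 => hz ((gcd_eq_zero_iff u z).1 h0).2
    exact ⟨GCDMonoid.gcd u z, u / GCDMonoid.gcd u z, z / GCDMonoid.gcd u z, hg,
      (EuclideanDomain.mul_div_cancel' hg (gcd_dvd_left u z)).symm,
      (EuclideanDomain.mul_div_cancel' hg (gcd_dvd_right u z)).symm,
      isCoprime_div_gcd_div_gcd hz⟩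
  obtain ⟨g, u', z', hg, e1, e2, hco⟩ := hex
  have h' : u' ^ 2 + b * u' * z' - z' ^ 2 = 0 := by
    have : g ^ 2 * (u' ^ 2 + b * u' * z' - z' ^ 2) = 0 := by
      rw [← h, e1, e2]; ring
    rcases mul_eq_zero.1 this with h0 | h0
    · exact absurd (pow_eq_zero_iff (two_ne_zero) |>.1 h0) hg
    · exact h0
  have hz' : IsUnit z' := by
    have hc2 : IsCoprime (u' ^ 2) z' := hco.pow_left
    exact hc2.isUnit_of_dvd' ⟨z' - b * u', by linear_combination h'⟩ dvd_rfl
  have hu' : IsUnit u' := by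
    have hc2 : IsCoprime u' (z' ^ 2) := hco.pow_right
    exact hc2.isUnit_of_dvd' dvd_rfl ⟨u' + b * z', by linear_combination -h'⟩
  have dz := natDegree_eq_zero_of_isUnit hz'
  have du := natDegree_eq_zero_of_isUnit hu'
  have hb0 : b ≠ 0 := by rintro rfl; simp at hb
  have e : b * u' * z' = z' ^ 2 - u' ^ 2 := by linear_combination h'
  have hd : (b * u' * z').natDegree = b.natDegree := by
    rw [natDegree_mul (mul_ne_zero hb0 hu'.ne_zero) hz'.ne_zero, natDegree_mul hb0 hu'.ne_zero,
      dz, du]; simp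
  have hd2 : (z' ^ 2 - u' ^ 2).natDegree ≤ 0 := by
    refine (natDegree_sub_le _ _).trans ?_
    rw [natDegree_pow, natDegree_pow, dz, du]; simp
  rw [← e, hd] at hd2
  omega

/-- coefficients of the transformed quadratic form -/
def cA (b q0 q1 : Fq[X]) : Fq[X] := q0 ^ 2 + b * q0 * q1 - q1 ^ 2

def cB (b q0 p0 q1 p1 : Fq[X]) : Fq[X] :=
  -(2 * q0 * p0 + b * (q0 * p1 + q1 * p0) - 2 * q1 * p1)

variable (Fq) in
/-- A quadratic polynomial with given coefficients -/
def quad (A B D : Fq[X]) : Fq[X][X] := C A * X ^ 2 + C B * X + C D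

def PP (b q0 p0 q1 p1 : Fq[X]) : Fq[X][X] :=
  quad Fq (cA b q0 q1) (cB b q0 p0 q1 p1) (cA b p0 p1)

theorem form_aniso {b q0 p0 q1 p1 : Fq[X]} (hb : 1 ≤ b.natDegree) {e : Fq[X]}
    (he : e * (q1 * p0 - q0 * p1) = 1) {s r : Fq[X]}
    (h : cA b q0 q1 * s ^ 2 + cB b q0 p0 q1 p1 * (s * r) + cA b p0 p1 * r ^ 2 = 0) :
    s = 0 ∧ r = 0 := by
  have := aniso hb (u := q0 * s - p0 * r) (z := q1 * s - p1 * r)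
    (by rw [← h]; unfold cA cB; ring)
  obtain ⟨h1, h2⟩ := this
  constructor
  · linear_combination (-s) * he - e * p1 * h1 + e * p0 * h2
  · linear_combination (-r) * he - e * q1 * h1 + e * q0 * h2

theorem quad_coeff2 (A B D : Fq[X]) : (quad Fq A B D).coeff 2 = A := by
  simp [quad, coeff_X, coeff_C]
theorem quad_coeff1 (A B D : Fq[X]) : (quad Fq A B D).coeff 1 = B := by
  simp [quad, coeff_X, coeff_C]
theorem quad_coeff0 (A B D : Fq[X]) : (quad Fq A B D).coeff 0 = D := by
  simp [quad, coeff_X, coeff_C]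

theorem quad_natDegree {A B D : Fq[X]} (hA : A ≠ 0) : (quad Fq A B D).natDegree = 2 :=
  natDegree_quadratic hA

theorem eq_quad {P : Fq[X][X]} (hP : P.natDegree ≤ 2) :
    P = quad Fq (P.coeff 2) (P.coeff 1) (P.coeff 0) :=
  eq_quadratic_of_degree_le_two (natDegree_le_iff_degree_le.1 hP)

theorem cA_ne {b q0 p0 q1 p1 : Fq[X]} (hb : 1 ≤ b.natDegree) {e : Fq[X]}
    (he : e * (q1 * p0 - q0 * p1) = 1) : cA b q0 q1 ≠ 0 := by
  intro h
  have := form_aniso hb he (s := 1) (r := 0) (by rw [h]; ring)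
  exact one_ne_zero this.1

/-- explicit representation of one, giving primitivity -/
theorem PP_one {b q0 p0 q1 p1 : Fq[X]} {e : Fq[X]}
    (he : e * (q1 * p0 - q0 * p1) = 1) :
    cA b q0 q1 * (e * p1) ^ 2 + cB b q0 p0 q1 p1 * ((e * p1) * (e * q1)) +
      cA b p0 p1 * (e * q1) ^ 2 = 1 := by
  unfold cA cB
  have : (e * (q1 * p0 - q0 * p1)) ^ 2 = 1 := by rw [he]; ring
  linear_combination this

theorem PP_primitive {b q0 p0 q1 p1 : Fq[X]} {e : Fq[X]}
    (he : e * (q1 * p0 - q0 * p1) = 1) : (PP b q0 p0 q1 p1).IsPrimitive := by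
  intro r hr
  rw [C_dvd_iff_dvd_coeff] at hr
  have h2 := hr 2
  have h1 := hr 1
  have h0 := hr 0
  unfold PP at h2 h1 h0
  rw [quad_coeff2] at h2
  rw [quad_coeff1] at h1
  rw [quad_coeff0] at h0
  refine isUnit_of_dvd_one ?_
  rw [← PP_one (b := b) he]
  exact dvd_add (dvd_add (h2.mul_right _) (h1.mul_right _)) (h0.mul_right _)

theorem PP_natDegree {b q0 p0 q1 p1 : Fq[X]} (hb : 1 ≤ b.natDegree) {e : Fq[X]}
    (he : e * (q1 * p0 - q0 * p1) = 1) : (PP b q0 p0 q1 p1).natDegree = 2 :=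
  quad_natDegree (cA_ne hb he)

theorem PP_irreducible {b q0 p0 q1 p1 : Fq[X]} (hb : 1 ≤ b.natDegree) {e : Fq[X]}
    (he : e * (q1 * p0 - q0 * p1) = 1) : Irreducible (PP b q0 p0 q1 p1) := by
  have hinj : Function.Injective (algebraMap Fq[X] (FractionRing Fq[X])) :=
    IsFractionRing.injective _ _
  rw [(PP_primitive he).irreducible_iff_irreducible_map_fraction_map (K := FractionRing Fq[X])]
  have hd : ((PP b q0 p0 q1 p1).map (algebraMap Fq[X] (FractionRing Fq[X]))).natDegree = 2 := by
    rw [natDegree_map_eq_of_injective hinj, PP_natDegree hb he]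
  refine irreducible_of_degree_le_three_of_not_isRoot ?_ ?_
  · rw [hd]; simp
  · intro x hx
    obtain ⟨s, r, hr, rfl⟩ := IsFractionRing.div_surjective (A := Fq[X]) x
    have hr0 : r ≠ 0 := nonZeroDivisors.ne_zero hr
    have hr1 : algebraMap Fq[X] (FractionRing Fq[X]) r ≠ 0 := by
      rwa [Ne, map_eq_zero_iff _ hinj]
    have h := hx.eq_zero
    simp only [PP, quad, Polynomial.map_add, Polynomial.map_mul, Polynomial.map_pow, map_C, map_X,
      eval_add, eval_mul, eval_pow, eval_C, eval_X] at h
    field_simp at h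
    have h2 := form_aniso hb he (s := s) (r := r) (hinj (by
      simp only [map_add, map_mul, map_pow, map_zero]
      linear_combination h))
    exact hr0 h2.2

/-- resultant of two quadratics -/
def res2 {R : Type*} [CommRing R] (A B D A' B' D' : R) : R :=
  (A * D' - A' * D) ^ 2 - (A * B' - A' * B) * (B * D' - B' * D)

theorem res_zero {b q0 p0 q1 p1 : Fq[X]} (hb : 1 ≤ b.natDegree) {e : Fq[X]}
    (he : e * (q1 * p0 - q0 * p1) = 1) {A' B' D' : Fq[X]}
    (h : res2 (cA b q0 q1) (cB b q0 p0 q1 p1) (cA b p0 p1) A' B' D' = 0) :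
    ∃ t : Fq[X], A' = t * cA b q0 q1 ∧ B' = t * cB b q0 p0 q1 p1 ∧ D' = t * cA b p0 p1 := by
  have hA := cA_ne hb he
  have h1 := PP_one (b := b) he
  have ha := form_aniso hb he (s := -((cA b q0 q1) * D' - A' * (cA b p0 p1)))
    (r := (cA b q0 q1) * B' - A' * (cB b q0 p0 q1 p1)) (by
      unfold res2 at h
      linear_combination (cA b q0 q1) * h)
  set A := cA b q0 q1
  set B := cB b q0 p0 q1 p1
  set D := cA b p0 p1
  obtain ⟨h2, h3⟩ := ha
  refine ⟨A' * (e * p1) ^ 2 + B' * ((e * p1) * (e * q1)) + D' * (e * q1) ^ 2, ?_, ?_, ?_⟩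
  · linear_combination (-A') * h1 + h2 * (e * q1) ^ 2 - h3 * ((e * p1) * (e * q1))
  · refine mul_left_cancel₀ hA ?_
    linear_combination (-A*B') * h1 - h3 * (0 * A) + (h2 * (e * q1) ^ 2 - h3 * ((e * p1) * (e * q1))) * B + h3 * (A * (e*p1)^2 + B * ((e * p1) * (e * q1)) + D * (e*q1)^2) 
  · refine mul_left_cancel₀ hA ?_
    linear_combination (-A*D') * h1 + (h2 * (e * q1) ^ 2 - h3 * ((e * p1) * (e * q1))) * D - h2 * (A * (e*p1)^2 + B * ((e * p1) * (e * q1)) + D * (e*q1)^2) 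

variable (Fq) in
/-- real powers of the cardinality -/
def qp (x : ℝ) : ℝ := QQ Fq ^ x

theorem qp_pos (x : ℝ) : 0 < qp Fq x := Real.rpow_pos_of_pos (QQ_pos Fq) x
theorem qp_mul (x y : ℝ) : qp Fq x * qp Fq y = qp Fq (x + y) :=
  (Real.rpow_add (QQ_pos Fq) x y).symm
theorem qp_zero : qp Fq 0 = 1 := Real.rpow_zero _
theorem qp_lt {x y : ℝ} : qp Fq x < qp Fq y ↔ x < y := Real.rpow_lt_rpow_left_iff (QQ_gt Fq)
theorem qp_le {x y : ℝ} : qp Fq x ≤ qp Fq y ↔ x ≤ y := Real.rpow_le_rpow_left_iff (QQ_gt Fq)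
theorem qp_rpow (x y : ℝ) : (qp Fq x) ^ y = qp Fq (x * y) :=
  (Real.rpow_mul (QQ_pos Fq).le x y).symm
theorem qp_inv (x : ℝ) : (qp Fq x)⁻¹ = qp Fq (-x) := (Real.rpow_neg (QQ_pos Fq).le x).symm
theorem qp_inj {x y : ℝ} (h : qp Fq x = qp Fq y) : x = y :=
  le_antisymm (qp_le.1 h.le) (qp_le.1 h.ge)

theorem v_qp (hv : IsAbsExt Fq v) {P : Fq[X]} (hP : P ≠ 0) :
    v (φ Fq P) = qp Fq P.natDegree := by
  rw [v_phi hv hP, qp, Real.rpow_natCast]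

theorem v_two_mul (hv : IsAbsExt Fq v) (y : L Fq) : v (2 * y) ≤ v y := by
  rw [two_mul]; exact v_add_le' hv le_rfl le_rfl

theorem q_succ (a : ℕ → Fq[X]) {k : ℕ} (hk : 1 ≤ k) :
    qSeq Fq a (k + 1) = a k * qSeq Fq a k + qSeq Fq a (k - 1) := by
  obtain ⟨j, rfl⟩ := Nat.exists_eq_add_of_le' hk
  rfl

theorem q_aux (a : ℕ → Fq[X]) (h : ∀ n, 1 ≤ n → 1 ≤ (a n).natDegree) (k : ℕ) :
    qSeq Fq a (k + 1) ≠ 0 ∧ (k ≠ 0 → (qSeq Fq a k).natDegree < (qSeq Fq a (k + 1)).natDegree) ∧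
    (qSeq Fq a (k + 2)).natDegree = (a (k + 1)).natDegree + (qSeq Fq a (k + 1)).natDegree := by
  induction k with
  | zero => simp [qSeq]
  | succ k ih =>
    obtain ⟨h1, h2, h3⟩ := ih
    have hk := h (k + 1) (by omega)
    have hk2 := h (k + 2) (by omega)
    have hne : qSeq Fq a (k + 2) ≠ 0 := by
      intro h0; rw [h0, natDegree_zero] at h3; omega
    have ha2 : a (k + 2) ≠ 0 := by intro h0; rw [h0, natDegree_zero] at hk2; omega
    refine ⟨hne, fun _ => by show _ < (qSeq Fq a (k + 2)).natDegree; omega, ?_⟩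
    show (a (k + 2) * qSeq Fq a (k + 2) + qSeq Fq a (k + 1)).natDegree = _
    have hm : (a (k + 2) * qSeq Fq a (k + 2)).natDegree =
      (a (k + 2)).natDegree + (qSeq Fq a (k + 2)).natDegree := natDegree_mul ha2 hne
    rw [natDegree_add_eq_left_of_natDegree_lt, hm]
    omega

theorem det_aux (a : ℕ → Fq[X]) (k : ℕ) :
    qSeq Fq a (k + 1) * pSeq Fq a k - qSeq Fq a k * pSeq Fq a (k + 1) = (-1) ^ k := by
  induction k with
  | zero => simp [qSeq, pSeq]
  | succ k ih =>
    show (a (k + 1) * qSeq Fq a (k + 1) + qSeq Fq a k) * pSeq Fq a (k + 1) -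
      qSeq Fq a (k + 1) * (a (k + 1) * pSeq Fq a (k + 1) + pSeq Fq a k) = _
    rw [pow_succ, ← ih]; ring

theorem det_one (a : ℕ → Fq[X]) (k : ℕ) : (-1) ^ k *
    (qSeq Fq a (k + 1) * pSeq Fq a k - qSeq Fq a k * pSeq Fq a (k + 1)) = 1 := by
  rw [det_aux, ← mul_pow]; simp

/-- degree of the denominators -/
def dg (a : ℕ → Fq[X]) (k : ℕ) : ℕ := (qSeq Fq a k).natDegree

/-- the remainders -/
def EE (a : ℕ → Fq[X]) (ξ : K Fq) (k : ℕ) : L Fq :=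
  φ Fq (qSeq Fq a k) * toL Fq ξ - φ Fq (pSeq Fq a k)

theorem EE_succ (a : ℕ → Fq[X]) (ξ : K Fq) (k : ℕ) :
    EE a ξ (k + 2) = φ Fq (a (k + 1)) * EE a ξ (k + 1) + EE a ξ k := by
  unfold EE
  rw [show qSeq Fq a (k + 2) = a (k + 1) * qSeq Fq a (k + 1) + qSeq Fq a k from rfl,
    show pSeq Fq a (k + 2) = a (k + 1) * pSeq Fq a (k + 1) + pSeq Fq a k from rfl]
  simp only [map_add, map_mul]; ring

theorem v_EE (hv : IsAbsExt Fq v) {a : ℕ → Fq[X]} {ξ : K Fq} (hξ : IsCFOf Fq ξ a) (k : ℕ) :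
    v (EE a ξ k) = qp Fq (-(dg a (k + 1))) := by
  rcases k with _ | k
  · simp [EE, qSeq, pSeq, dg, v_neg hv, v_one hv, qp_zero]
  · have h := hξ.2 k
    have hq := (q_aux a hξ.1 k).1
    have hq2 := (q_aux a hξ.1 (k + 1)).1
    have hphi : ∀ P, φ Fq P = toL Fq (polyToK Fq P) := fun P => rfl
    have hq' : φ Fq (qSeq Fq a (k + 1)) ≠ 0 := by
      rwa [Ne, map_eq_zero_iff _ (phi_inj hv)]
    rw [← hv.extends_kabs, ← hv.extends_kabs, ← hv.extends_kabs, map_sub, map_div₀,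
      ← hphi, ← hphi, ← hphi, v_qp hv hq, v_qp hv hq2, qp_mul, qp_inv] at h
    have : EE a ξ (k + 1) = φ Fq (qSeq Fq a (k + 1)) *
      (toL Fq ξ - φ Fq (pSeq Fq a (k + 1)) / φ Fq (qSeq Fq a (k + 1))) := by
      unfold EE; field_simp
    rw [this, hv.map_mul, h, v_qp hv hq, qp_mul]
    congr 1
    unfold dg
    ring

theorem natDegree_cA (hv : IsAbsExt Fq v) {a : ℕ → Fq[X]} (h : ∀ n, 1 ≤ n → 1 ≤ (a n).natDegree)
    {b c : Fq[X]} (hb : 1 ≤ b.natDegree) (hbc : b ≠ c) {m : ℕ} (hm : 1 ≤ m) (ham : a m = c) :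
    (cA b (qSeq Fq a m) (qSeq Fq a (m + 1))).natDegree =
      (b - c).natDegree + dg a m + dg a (m + 1) := by
  have hA := cA_ne hb (det_one a m)
  obtain ⟨j, rfl⟩ := Nat.exists_eq_add_of_le' hm
  obtain ⟨h1, h2, h3⟩ := q_aux a h j
  obtain ⟨h4, h5, h6⟩ := q_aux a h (j + 1)
  have h5 := h5 (by omega)
  have e : cA b (qSeq Fq a (j + 1)) (qSeq Fq a (j + 1 + 1)) =
    ((qSeq Fq a (j + 1)) ^ 2 - qSeq Fq a (j + 1 + 1) * qSeq Fq a j) +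
      (b - c) * qSeq Fq a (j + 1) * qSeq Fq a (j + 1 + 1) := by
    have : qSeq Fq a (j + 1 + 1) = c * qSeq Fq a (j + 1) + qSeq Fq a j := by
      rw [← ham]; rfl
    unfold cA
    linear_combination (-qSeq Fq a (j + 1 + 1)) * this
  have hD : b - c ≠ 0 := sub_ne_zero.2 hbc
  have hmain : v (φ Fq ((b - c) * qSeq Fq a (j + 1) * qSeq Fq a (j + 1 + 1))) =
      qp Fq ((b - c).natDegree + dg a (j + 1) + dg a (j + 1 + 1)) := by
    rw [map_mul, map_mul, hv.map_mul, hv.map_mul, v_qp hv hD, v_qp hv h1, v_qp hv h4,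
      qp_mul, qp_mul]
    rfl
  have hAv := v_qp hv hA
  rw [e, map_add, v_add_eq hv, hmain, ← e] at hAv
  · have := qp_inj hAv
    exact_mod_cast this.symm
  rw [hmain, map_sub]
  have h5' : ((qSeq Fq a (j + 1)).natDegree : ℝ) < ((qSeq Fq a (j + 1 + 1)).natDegree : ℝ) := by
    exact_mod_cast h5
  have hDn : (0:ℝ) ≤ (b - c).natDegree := Nat.cast_nonneg _
  refine v_sub_lt hv ?_ ?_
  · rw [map_pow, v_pow hv, v_qp hv h1, pow_two, qp_mul, qp_lt]
    unfold dg
    linarith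
  · rw [map_mul, hv.map_mul, v_qp hv h4]
    by_cases hj : j = 0
    · subst hj
      simp [qSeq, v_zero hv, qp_pos]
    · have hj0 : qSeq Fq a j ≠ 0 := by
        obtain ⟨i, rfl⟩ := Nat.exists_eq_succ_of_ne_zero hj
        exact (q_aux a h i).1
      have h2' : ((qSeq Fq a j).natDegree : ℝ) < ((qSeq Fq a (j + 1)).natDegree : ℝ) := by
        exact_mod_cast h2 hj
      rw [v_qp hv hj0, qp_mul, qp_lt]
      unfold dg
      linarith

/-- the quadratic form in the field -/
def Qf (b : Fq[X]) (u z : L Fq) : L Fq := u ^ 2 + φ Fq b * u * z - z ^ 2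

theorem v_Qf_step (hv : IsAbsExt Fq v) {a : ℕ → Fq[X]} {ξ : K Fq} {b : Fq[X]} {m : ℕ} (j : ℕ)
    (h : ∀ i, i < j → a (m + i + 1) = b) :
    v (Qf b (EE a ξ (m + j)) (EE a ξ (m + j + 1))) = v (Qf b (EE a ξ m) (EE a ξ (m + 1))) := by
  induction j with
  | zero => rfl
  | succ j ih =>
    rw [← ih fun i hi => h i (by omega)]
    rw [← v_neg hv (Qf b (EE a ξ (m + j)) (EE a ξ (m + j + 1)))]
    congr 1
    have e : EE a ξ (m + (j + 1) + 1) = φ Fq b * EE a ξ (m + j + 1) + EE a ξ (m + j) := by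
      rw [← h j (by omega)]; exact EE_succ a ξ (m + j)
    rw [e, show m + (j + 1) = m + j + 1 from rfl]
    unfold Qf
    ring

theorem v_Qf (hv : IsAbsExt Fq v) {a : ℕ → Fq[X]} {ξ : K Fq} (hξ : IsCFOf Fq ξ a)
    {b c : Fq[X]} (hbc : b ≠ c) {k : ℕ} (hk : a (k + 1) = c) :
    v (Qf b (EE a ξ k) (EE a ξ (k + 1))) =
      qp Fq ((b - c).natDegree - dg a (k + 1) - dg a (k + 2)) := by
  have hD : b - c ≠ 0 := sub_ne_zero.2 hbc
  have hDn : (0:ℝ) ≤ (b - c).natDegree := Nat.cast_nonneg _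
  have e : Qf b (EE a ξ k) (EE a ξ (k + 1)) =
    (EE a ξ k * EE a ξ (k + 2) - EE a ξ (k + 1) ^ 2) +
      φ Fq (b - c) * EE a ξ k * EE a ξ (k + 1) := by
    rw [EE_succ, hk, map_sub]; unfold Qf; ring
  have hm : v (φ Fq (b - c) * EE a ξ k * EE a ξ (k + 1)) =
      qp Fq ((b - c).natDegree - dg a (k + 1) - dg a (k + 2)) := by
    rw [hv.map_mul, hv.map_mul, v_EE hv hξ, v_EE hv hξ, v_qp hv hD, qp_mul, qp_mul]
    congr 1
  have l1 : (dg a (k + 1) : ℝ) < dg a (k + 2) := by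
    exact_mod_cast (q_aux a hξ.1 (k + 1)).2.1 (by omega)
  have l2 : (dg a (k + 2) : ℝ) < dg a (k + 3) := by
    exact_mod_cast (q_aux a hξ.1 (k + 2)).2.1 (by omega)
  rw [e, v_add_eq hv, hm]
  rw [hm]
  refine v_sub_lt hv ?_ ?_
  · rw [hv.map_mul, v_EE hv hξ, v_EE hv hξ, qp_mul, qp_lt]
    linarith
  · rw [v_pow hv, v_EE hv hξ, pow_two, qp_mul, qp_lt]
    linarith

theorem v_ff (hv : IsAbsExt Fq v) {a : ℕ → Fq[X]} {ξ : K Fq} (hξ : IsCFOf Fq ξ a)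
    {b : Fq[X]} (hb : 1 ≤ b.natDegree) {m : ℕ} (hm : 1 ≤ m) (hk : a (m + 1) = b) :
    v (2 * φ Fq (cA b (qSeq Fq a m) (qSeq Fq a (m + 1))) * toL Fq ξ +
      φ Fq (cB b (qSeq Fq a m) (pSeq Fq a m) (qSeq Fq a (m + 1)) (pSeq Fq a (m + 1)))) =
    qp Fq b.natDegree := by
  have hb0 : b ≠ 0 := by rintro rfl; simp at hb
  have hd := congrArg (φ Fq) (det_aux a m)
  simp only [map_sub, map_mul, map_pow, map_neg, map_one] at hd
  have e : 2 * φ Fq (cA b (qSeq Fq a m) (qSeq Fq a (m + 1))) * toL Fq ξ +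
      φ Fq (cB b (qSeq Fq a m) (pSeq Fq a m) (qSeq Fq a (m + 1)) (pSeq Fq a (m + 1))) =
    (2 * (EE a ξ m * φ Fq (qSeq Fq a m)) + 2 * (φ Fq b * EE a ξ (m + 1) * φ Fq (qSeq Fq a m))
      - 2 * (EE a ξ (m + 1) * φ Fq (qSeq Fq a (m + 1)))) + -(φ Fq b * (-1) ^ m) := by
    rw [← hd]
    unfold EE cA cB
    simp only [map_sub, map_mul, map_pow, map_neg, map_one, map_add, map_ofNat]
    ring
  have hmain : v (-(φ Fq b * (-1) ^ m)) = qp Fq b.natDegree := by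
    rw [v_neg hv, hv.map_mul, v_pow hv, v_neg hv, v_one hv, v_qp hv hb0]; simp
  have hq0 : qSeq Fq a m ≠ 0 := by
    obtain ⟨j, rfl⟩ := Nat.exists_eq_add_of_le' hm
    exact (q_aux a hξ.1 j).1
  have hq1 := (q_aux a hξ.1 m).1
  have l1 : (dg a m : ℝ) < dg a (m + 1) := by
    exact_mod_cast (q_aux a hξ.1 m).2.1 (by omega)
  have l2 : (dg a (m + 2) : ℝ) = b.natDegree + dg a (m + 1) := by
    have := (q_aux a hξ.1 m).2.2
    rw [hk] at this
    exact_mod_cast this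
  have hb1 : (1:ℝ) ≤ b.natDegree := by exact_mod_cast hb
  rw [e, v_add_eq hv, hmain]
  rw [hmain]
  refine v_sub_lt hv (v_add_lt hv ?_ ?_) ?_
  · refine (v_two_mul hv _).trans_lt ?_
    rw [hv.map_mul, v_EE hv hξ, v_qp hv hq0, qp_mul, qp_lt]
    unfold dg at *
    linarith
  · refine (v_two_mul hv _).trans_lt ?_
    rw [hv.map_mul, hv.map_mul, v_EE hv hξ, v_qp hv hq0, v_qp hv hb0, qp_mul, qp_mul, qp_lt]
    unfold dg at *
    linarith
  · refine (v_two_mul hv _).trans_lt ?_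
    rw [hv.map_mul, v_EE hv hξ, v_qp hv hq1, qp_mul, qp_lt]
    unfold dg at *
    linarith

theorem Qf_eq (b : Fq[X]) (a : ℕ → Fq[X]) (ξ : K Fq) (m : ℕ) :
    φ Fq (cA b (qSeq Fq a m) (qSeq Fq a (m + 1))) * toL Fq ξ ^ 2 +
      φ Fq (cB b (qSeq Fq a m) (pSeq Fq a m) (qSeq Fq a (m + 1)) (pSeq Fq a (m + 1))) * toL Fq ξ +
      φ Fq (cA b (pSeq Fq a m) (pSeq Fq a (m + 1))) = Qf b (EE a ξ m) (EE a ξ (m + 1)) := by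
  unfold EE cA cB Qf
  simp only [map_sub, map_mul, map_pow, map_neg, map_one, map_add, map_ofNat]
  ring

/-- logarithmic height of a polynomial of degree at most two -/
def ht (P : Fq[X][X]) : ℕ :=
  max (P.coeff 2).natDegree (max (P.coeff 1).natDegree (P.coeff 0).natDegree)

theorem natDegree_coeff_le_ht {P : Fq[X][X]} (hd : P.natDegree ≤ 2) (i : ℕ) :
    (P.coeff i).natDegree ≤ ht P := by
  unfold ht
  rcases Nat.lt_or_ge 2 i with h | h
  · rw [coeff_eq_zero_of_natDegree_lt (by omega)]; simp
  · interval_cases i <;> simp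

theorem v_coeff_le (hv : IsAbsExt Fq v) {P : Fq[X][X]} (hd : P.natDegree ≤ 2) (i : ℕ) :
    v (φ Fq (P.coeff i)) ≤ qp Fq (ht P) := by
  rw [qp, Real.rpow_natCast]
  exact v_phi_le hv _ _ (natDegree_coeff_le_ht hd i)

theorem Hpoly_eq (hv : IsAbsExt Fq v) {P : Fq[X][X]} (hP : P ≠ 0) (hd : P.natDegree ≤ 2) :
    Hpoly Fq P = qp Fq (ht P) := by
  have hk : ∀ i, kabs Fq (polyToK Fq (P.coeff i)) = v (φ Fq (P.coeff i)) := fun i =>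
    (hv.extends_kabs _).symm
  unfold Hpoly
  simp_rw [hk]
  have hb : BddAbove (Set.range fun i => v (φ Fq (P.coeff i))) :=
    ⟨qp Fq (ht P), by rintro _ ⟨i, rfl⟩; exact v_coeff_le hv hd i⟩
  apply le_antisymm
  · exact ciSup_le fun i => v_coeff_le hv hd i
  · have hex : ∃ i, P.coeff i ≠ 0 ∧ (P.coeff i).natDegree = ht P := by
      by_cases h0 : ht P = 0
      · refine ⟨P.natDegree, by simpa using hP, ?_⟩
        have := natDegree_coeff_le_ht hd P.natDegree
        omega
      · have h3 : ∃ i, (P.coeff i).natDegree = ht P := by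
          unfold ht
          rcases max_choice (P.coeff 2).natDegree
            (max (P.coeff 1).natDegree (P.coeff 0).natDegree) with h | h
          · exact ⟨2, h.symm⟩
          · rcases max_choice (P.coeff 1).natDegree (P.coeff 0).natDegree with h' | h'
            · exact ⟨1, by rw [h, h']⟩
            · exact ⟨0, by rw [h, h']⟩
        obtain ⟨i, hi⟩ := h3
        refine ⟨i, ?_, hi⟩
        intro h; rw [h, natDegree_zero] at hi; exact h0 hi.symm
    obtain ⟨i, hi, hi'⟩ := hex
    rw [← hi', ← v_qp hv hi]
    exact le_ciSup hb i

theorem evalL_quad (P : Fq[X][X]) (hd : P.natDegree ≤ 2) (α : L Fq) :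
    evalL Fq P α = φ Fq (P.coeff 2) * α ^ 2 + φ Fq (P.coeff 1) * α + φ Fq (P.coeff 0) := by
  conv_lhs => rw [eq_quad hd]
  simp [evalL, quad]

theorem kabs_evalK (hv : IsAbsExt Fq v) (P : Fq[X][X]) (ξ : K Fq) :
    kabs Fq (evalK Fq P ξ) = v (evalL Fq P (toL Fq ξ)) := by
  rw [← hv.extends_kabs]
  unfold evalK evalL φ
  rw [hom_eval₂]

/-- the derivative value -/
def fder (P : Fq[X][X]) (x : L Fq) : L Fq := 2 * φ Fq (P.coeff 2) * x + φ Fq (P.coeff 1)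

theorem taylor2 (P : Fq[X][X]) (hd : P.natDegree ≤ 2) (x α : L Fq) (h : evalL Fq P α = 0) :
    evalL Fq P x = (x - α) * (fder P x - φ Fq (P.coeff 2) * (x - α)) := by
  rw [evalL_quad P hd] at h ⊢
  unfold fder
  linear_combination h

theorem mul_le_qp (hv : IsAbsExt Fq v) {x y : L Fq} {s t : ℝ} (hx : v x ≤ qp Fq s)
    (hy : v y ≤ qp Fq t) : v (x * y) ≤ qp Fq (s + t) := by
  rw [hv.map_mul, ← qp_mul]
  exact mul_le_mul hx hy (hv.nonneg _) (qp_pos _).le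

theorem mul_lt_one_qp (hv : IsAbsExt Fq v) {x y : L Fq} {s t : ℝ} (hx : v x ≤ qp Fq s)
    (hy : v y < qp Fq t) (h : s + t ≤ 0) : v (x * y) < 1 := by
  rw [hv.map_mul]
  calc _ ≤ qp Fq s * v y := mul_le_mul_of_nonneg_right hx (hv.nonneg _)
    _ < qp Fq s * qp Fq t := mul_lt_mul_of_pos_left hy (qp_pos _)
    _ = qp Fq (s + t) := qp_mul _ _
    _ ≤ qp Fq 0 := qp_le.2 h
    _ = 1 := qp_zero

theorem res_lt_one (hv : IsAbsExt Fq v) {A f e A' f' e' : L Fq} {h H β ε : ℝ}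
    (hA : v A ≤ qp Fq h) (hf : v f ≤ qp Fq β) (he : v e ≤ qp Fq (-ε))
    (hA' : v A' ≤ qp Fq H) (hf' : v f' ≤ qp Fq H) (he' : v e' < qp Fq (-(h + H + 2 * β)))
    (hH : 0 ≤ H) (hβ : 0 ≤ β) (hβh : β ≤ h) (hε : h + 2 * H < ε) :
    v (res2 A f e A' f' e') < 1 := by
  have he1 : v e < qp Fq (-(h + 2 * H)) := he.trans_lt (qp_lt.2 (by linarith))
  have expand : res2 A f e A' f' e' = (A * e' - A' * e) * (A * e' - A' * e) -
      (((A * f') * f) * e' - ((A * f') * f') * e - ((A' * f) * f) * e' + ((A' * f) * f') * e) := by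
    unfold res2; ring
  rw [expand]
  have h1 : v (A * e' - A' * e) < 1 := by
    refine v_sub_lt hv (mul_lt_one_qp hv hA he' (by linarith))
      (mul_lt_one_qp hv hA' he1 (by linarith))
  refine v_sub_lt hv ?_ (v_add_lt hv (v_sub_lt hv (v_sub_lt hv ?_ ?_) ?_) ?_)
  · rw [hv.map_mul]
    have := hv.nonneg (A * e' - A' * e)
    nlinarith
  · exact mul_lt_one_qp hv (mul_le_qp hv (mul_le_qp hv hA hf') hf) he' (by linarith)
  · exact mul_lt_one_qp hv (mul_le_qp hv (mul_le_qp hv hA hf') hf') he1 (by linarith)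
  · exact mul_lt_one_qp hv (mul_le_qp hv (mul_le_qp hv hA' hf) hf) he' (by linarith)
  · exact mul_lt_one_qp hv (mul_le_qp hv (mul_le_qp hv hA' hf) hf') he1 (by linarith)

/-- A good quadratic approximation block. -/
structure Blk (v : L Fq → ℝ) (x : L Fq) (F : Fq[X][X]) (h ε β : ℝ) : Prop where
  deg : F.natDegree = 2
  irr : Irreducible F
  prim : F.IsPrimitive
  res : ∀ A' B' D' : Fq[X], res2 (F.coeff 2) (F.coeff 1) (F.coeff 0) A' B' D' = 0 →
    ∃ t : Fq[X], A' = t * F.coeff 2 ∧ B' = t * F.coeff 1 ∧ D' = t * F.coeff 0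
  lead : ((F.coeff 2).natDegree : ℝ) = h
  der : v (fder F x) = qp Fq β
  val : v (evalL Fq F x) = qp Fq (-ε)
  hβ : 0 ≤ β
  hβh : β ≤ h
  hε : 0 ≤ ε
  hx : v x ≤ 1

theorem Blk.c2 {x : L Fq} {F : Fq[X][X]} {h ε β : ℝ} (B : Blk v x F h ε β) :
    F.coeff 2 ≠ 0 := by
  have := B.deg
  rw [← this]
  intro h0
  have hF : F = 0 := leadingCoeff_eq_zero.1 h0
  rw [hF] at this; simp at this

theorem Blk.vA (hv : IsAbsExt Fq v) {x : L Fq} {F : Fq[X][X]} {h ε β : ℝ}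
    (B : Blk v x F h ε β) : v (φ Fq (F.coeff 2)) = qp Fq h := by
  rw [v_qp hv B.c2, B.lead]

theorem mul_x_le (hv : IsAbsExt Fq v) {x y : L Fq} {r : ℝ} (hx : v x ≤ 1) (hy : v y ≤ r) :
    v (y * x) ≤ r := by
  rw [hv.map_mul]
  have := hv.nonneg x
  have := hv.nonneg y
  nlinarith

theorem Blk.ht_eq (hv : IsAbsExt Fq v) {x : L Fq} {F : Fq[X][X]} {h ε β : ℝ}
    (B : Blk v x F h ε β) : (ht F : ℝ) = h := by
  have hA := B.vA hv
  have hf : v (fder F x) ≤ qp Fq h := by rw [B.der]; exact qp_le.2 B.hβh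
  have he : v (evalL Fq F x) ≤ qp Fq h := by
    rw [B.val]; exact qp_le.2 (by linarith [B.hε, B.hβ, B.hβh])
  have h1 : v (φ Fq (F.coeff 1)) ≤ qp Fq h := by
    have : φ Fq (F.coeff 1) = fder F x - 2 * (φ Fq (F.coeff 2) * x) := by unfold fder; ring
    rw [this]
    exact v_sub_le' hv hf ((v_two_mul hv _).trans (mul_x_le hv B.hx hA.le))
  have h0 : v (φ Fq (F.coeff 0)) ≤ qp Fq h := by
    have : φ Fq (F.coeff 0) = evalL Fq F x - fder F x * x + φ Fq (F.coeff 2) * x * x := by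
      rw [evalL_quad F B.deg.le]; unfold fder; ring
    rw [this]
    exact v_add_le' hv (v_sub_le' hv he (mul_x_le hv B.hx hf))
      (mul_x_le hv B.hx (mul_x_le hv B.hx hA.le))
  have key : ∀ P : Fq[X], v (φ Fq P) ≤ qp Fq h → P.natDegree ≤ (F.coeff 2).natDegree := by
    intro P hP
    by_cases hP0 : P = 0
    · simp [hP0]
    · rw [v_qp hv hP0, qp_le, ← B.lead] at hP
      exact_mod_cast hP
  unfold ht
  rw [max_eq_left (max_le (key _ h1) (key _ h0)), B.lead]

theorem Blk.approx (hv : IsAbsExt Fq v) {x : L Fq} {F : Fq[X][X]} {h ε β : ℝ}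
    (B : Blk v x F h ε β) {P : Fq[X][X]} (hd : P.natDegree ≤ 2) (hH : h + 2 * ht P < ε) :
    (∃ t : Fq[X], P = C t * F) ∨ qp Fq (-(h + ht P + 2 * β)) ≤ v (evalL Fq P x) := by
  by_cases hr : res2 (F.coeff 2) (F.coeff 1) (F.coeff 0) (P.coeff 2) (P.coeff 1) (P.coeff 0) = 0
  · left
    obtain ⟨t, h2, h1, h0⟩ := B.res _ _ _ hr
    refine ⟨t, ?_⟩
    conv_lhs => rw [eq_quad hd]
    conv_rhs => rw [eq_quad B.deg.le]
    rw [h2, h1, h0]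
    simp only [quad, map_mul]; ring
  · right
    by_contra! hlt
    have hge := v_phi_ge hv hr
    have e1 : φ Fq (res2 (F.coeff 2) (F.coeff 1) (F.coeff 0) (P.coeff 2) (P.coeff 1)
        (P.coeff 0)) = res2 (φ Fq (F.coeff 2)) (fder F x) (evalL Fq F x) (φ Fq (P.coeff 2))
        (fder P x) (evalL Fq P x) := by
      rw [evalL_quad F B.deg.le, evalL_quad P hd]
      unfold res2 fder
      simp only [map_sub, map_mul, map_pow]
      ring
    rw [e1] at hge
    have hf' : v (fder P x) ≤ qp Fq (ht P) := by
      unfold fder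
      rw [mul_assoc]
      exact v_add_le' hv ((v_two_mul hv _).trans (mul_x_le hv B.hx (v_coeff_le hv hd 2)))
        (v_coeff_le hv hd 1)
    have := res_lt_one hv (B.vA hv).le B.der.le B.val.le (v_coeff_le hv hd 2) hf' hlt
      (Nat.cast_nonneg _) B.hβ B.hβh hH
    linarith

theorem Blk.root_lower (hv : IsAbsExt Fq v) {x : L Fq} {F : Fq[X][X]} {h ε β : ℝ}
    (B : Blk v x F h ε β) {α : L Fq} (hα : evalL Fq F α = 0) (hδ : v (x - α) ≤ qp Fq (-h)) :
    qp Fq (-ε) ≤ v (x - α) * qp Fq β := by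
  rw [← B.val, taylor2 F B.deg.le x α hα, hv.map_mul]
  refine mul_le_mul_of_nonneg_left ?_ (hv.nonneg _)
  refine v_sub_le' hv B.der.le ((mul_le_qp hv (B.vA hv).le hδ).trans (qp_le.2 ?_))
  linarith [B.hβ]

theorem Blk.root_exists (hv : IsAbsExt Fq v) {x : L Fq} {F : Fq[X][X]} {h ε β : ℝ}
    (B : Blk v x F h ε β) : ∃ α : L Fq, evalL Fq F α = 0 ∧ 0 < v (x - α) ∧
      v (x - α) ≤ qp Fq (-ε - β) := by
  have hA0 : φ Fq (F.coeff 2) ≠ 0 := by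
    rw [Ne, map_eq_zero_iff _ (phi_inj hv)]; exact B.c2
  have hne : ∀ α, evalL Fq F α = 0 → 0 < v (x - α) := by
    intro α hα
    refine v_pos hv fun h0 => ?_
    rw [← sub_eq_zero.1 h0] at hα
    have := B.val
    rw [hα, v_zero hv] at this
    exact absurd this (qp_pos _).ne
  have hmap : (F.map (φ Fq)).natDegree = 2 := by
    rw [natDegree_map_eq_of_injective (phi_inj hv), B.deg]
  obtain ⟨α, hα⟩ := IsAlgClosed.exists_root (F.map (φ Fq)) (by
    intro h0
    have := natDegree_eq_zero_iff_degree_le_zero.2 h0.le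
    omega)
  have hα' : evalL Fq F α = 0 := by
    have := hα.eq_zero
    rwa [eval_map] at this
  -- the other root
  set α' := -(φ Fq (F.coeff 1)) / φ Fq (F.coeff 2) - α with hα'def
  have hsum : φ Fq (F.coeff 2) * (α' + α) = -(φ Fq (F.coeff 1)) := by
    rw [hα'def]; field_simp; ring
  have hα'' : evalL Fq F α' = 0 := by
    rw [evalL_quad F B.deg.le] at hα' ⊢
    linear_combination hα' + (α' - α) * hsum
  have hprod : evalL Fq F x = φ Fq (F.coeff 2) * (x - α') * (x - α) := by
    rw [evalL_quad F B.deg.le] at hα' ⊢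
    linear_combination hα' + (x - α) * hsum
  have hder : fder F x = φ Fq (F.coeff 2) * (x - α') + φ Fq (F.coeff 2) * (x - α) := by
    unfold fder; linear_combination hsum
  have hmain : ∀ y : L Fq, ∀ z : L Fq, qp Fq β ≤ v (φ Fq (F.coeff 2) * y) →
      evalL Fq F x = φ Fq (F.coeff 2) * y * z → v z ≤ qp Fq (-ε - β) := by
    intro y z h1 h2
    have h3 := B.val
    rw [h2, hv.map_mul] at h3
    have h4 : qp Fq β * v z ≤ qp Fq (-ε) := by
      rw [← h3]; exact mul_le_mul_of_nonneg_right h1 (hv.nonneg _)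
    have h5 : qp Fq (-ε) = qp Fq β * qp Fq (-ε - β) := by rw [qp_mul]; congr 1; ring
    rw [h5] at h4
    exact le_of_mul_le_mul_left h4 (qp_pos _)
  have hor := hv.add_le (φ Fq (F.coeff 2) * (x - α')) (φ Fq (F.coeff 2) * (x - α))
  rw [← hder, B.der] at hor
  rcases le_max_iff.1 hor with h1 | h1
  · exact ⟨α, hα', hne α hα', hmain _ _ h1 hprod⟩
  · exact ⟨α', hα'', hne α' hα'', hmain _ _ h1 (by rw [hprod]; ring)⟩

theorem general_upper (hv : IsAbsExt Fq v) {P : Fq[X][X]} (hd : P.natDegree ≤ 2) {x α : L Fq}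
    (hx : v x ≤ 1) (hα : evalL Fq P α = 0) (hδ : v (x - α) ≤ 1) :
    v (evalL Fq P x) ≤ v (x - α) * qp Fq (ht P) := by
  rw [taylor2 P hd x α hα, hv.map_mul]
  refine mul_le_mul_of_nonneg_left ?_ (hv.nonneg _)
  refine v_sub_le' hv ?_ (mul_x_le hv hδ (v_coeff_le hv hd 2))
  unfold fder
  rw [mul_assoc]
  exact v_add_le' hv ((v_two_mul hv _).trans (mul_x_le hv hx (v_coeff_le hv hd 2)))
        (v_coeff_le hv hd 1)

theorem exists_lift_frac {R E : Type*} [CommRing R] [IsDomain R] [Field E] (f : R →+* E)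
    (hf : Function.Injective f) :
    ∃ ψ : FractionRing R →+* E, ψ.comp (algebraMap R (FractionRing R)) = f :=
  ⟨IsFractionRing.lift hf, RingHom.ext fun x => IsFractionRing.lift_algebraMap hf x⟩

theorem assoc_of_common (hv : IsAbsExt Fq v) {R F : Fq[X][X]} (hR : Irreducible R)
    (hRp : R.IsPrimitive) (hF : Irreducible F) (hFp : F.IsPrimitive) {α : L Fq}
    (h1 : evalL Fq R α = 0) (h2 : evalL Fq F α = 0) : Associated R F := by
  have hR' := (hRp.irreducible_iff_irreducible_map_fraction_map (K := FractionRing Fq[X])).1 hR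
  have hdvd : R.map (algebraMap Fq[X] (FractionRing Fq[X])) ∣
      F.map (algebraMap Fq[X] (FractionRing Fq[X])) := by
    rcases dvd_or_isCoprime _ (F.map (algebraMap Fq[X] (FractionRing Fq[X]))) hR' with h | h
    · exact h
    · exfalso
      obtain ⟨ψ, hψ⟩ := exists_lift_frac (φ Fq) (phi_inj hv)
      obtain ⟨s, t, hst⟩ := h
      have := congrArg (eval₂ ψ α) hst
      rw [eval₂_add, eval₂_mul, eval₂_mul, eval₂_map, eval₂_map, hψ, eval₂_one] at this
      unfold evalL at h1 h2
      rw [h1, h2] at this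
      simp at this
  have hd : R ∣ F := hRp.dvd_of_fraction_map_dvd_fraction_map (K := FractionRing Fq[X]) hdvd
  exact hR.associated_of_dvd hF hd

theorem ht_assoc {R F : Fq[X][X]} (h : Associated R F) :
    ht R = ht F ∧ R.natDegree = F.natDegree := by
  obtain ⟨u, rfl⟩ := h
  obtain ⟨r, hr, hru⟩ := isUnit_iff.1 u.isUnit
  obtain ⟨k, hk, hkr⟩ := isUnit_iff.1 hr
  have hk0 : k ≠ 0 := hk.ne_zero
  rw [← hru, ← hkr]
  have hc : ∀ i, ((R * C (C k)).coeff i).natDegree = (R.coeff i).natDegree := by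
    intro i
    rw [coeff_mul_C, natDegree_mul_C hk0]
  constructor
  · unfold ht
    simp only [hc]
  · exact (natDegree_mul_C (by simpa using hk0)).symm

theorem minPoly_spec {α : L Fq} (h : IsAlgElem Fq α) : IsMinPolyOf Fq (minPolyPrim Fq α) α := by
  unfold minPolyPrim
  rw [dif_pos h]
  exact h.choose_spec

theorem Blk.isMin (hv : IsAbsExt Fq v) {x : L Fq} {F : Fq[X][X]} {h ε β : ℝ}
    (B : Blk v x F h ε β) {α : L Fq} (hα : evalL Fq F α = 0) :
    IsAlgElem Fq α ∧ degAlg Fq α = 2 ∧ heightAlg Fq α = qp Fq h ∧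
      (ht (minPolyPrim Fq α) : ℝ) = h := by
  have hl : F.leadingCoeff ≠ 0 := leadingCoeff_ne_zero.2 B.irr.ne_zero
  have hl2 : F.leadingCoeff.leadingCoeff ≠ 0 := leadingCoeff_ne_zero.2 hl
  have hk : F.leadingCoeff.leadingCoeff⁻¹ ≠ 0 := inv_ne_zero hl2
  have hu : IsUnit (C (C F.leadingCoeff.leadingCoeff⁻¹) : Fq[X][X]) :=
    isUnit_C.2 (isUnit_C.2 hk.isUnit)
  have hex : IsAlgElem Fq α := by
    refine ⟨C (C F.leadingCoeff.leadingCoeff⁻¹) * F, ?_, ?_, ?_, ?_, ?_⟩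
    · rw [natDegree_C_mul (by simpa using hk), B.deg]; norm_num
    · exact (irreducible_isUnit_mul hu).2 B.irr
    · intro r hr
      exact B.prim r (hu.dvd_mul_left.1 hr)
    · rw [leadingCoeff_mul, leadingCoeff_C, Monic, leadingCoeff_mul, leadingCoeff_C,
        inv_mul_cancel₀ hl2]
    · unfold evalL at *
      rw [eval₂_mul, hα, mul_zero]
  obtain ⟨h1, h2, h3, h4, h5⟩ := minPoly_spec hex
  have ha := ht_assoc (assoc_of_common hv h2 h3 B.irr B.prim h5 hα)
  refine ⟨hex, ?_, ?_, by rw [ha.1, B.ht_eq hv]⟩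
  · unfold degAlg; rw [ha.2, B.deg]
  · unfold heightAlg
    rw [Hpoly_eq hv h2.ne_zero (by rw [ha.2, B.deg]), ha.1, B.ht_eq hv]

/-- the asymptotic property of the height sequence -/
def Asym (w : ℝ) (h : ℕ → ℝ) : Prop :=
  ∀ α β : ℝ, 0 < α * w + β → Tendsto (fun i => α * h (i + 1) + β * h i) atTop atTop

theorem asym_of_tendsto {w : ℝ} (hw : 1 < w) {h : ℕ → ℝ} {G : ℝ} (hG : 0 < G)
    (ht : Tendsto (fun i => h i / w ^ i) atTop (nhds G)) : Asym w h := by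
  intro α β hab
  have hw0 : w ≠ 0 := by positivity
  have h1 : Tendsto (fun i => h (i + 1) / w ^ (i + 1)) atTop (nhds G) :=
    ht.comp (tendsto_add_atTop_nat 1)
  have h2 : Tendsto (fun i => α * w * (h (i + 1) / w ^ (i + 1)) + β * (h i / w ^ i)) atTop
      (nhds (α * w * G + β * G)) := (h1.const_mul _).add (ht.const_mul _)
  have h3 : 0 < α * w * G + β * G := by nlinarith
  have h4 := Tendsto.atTop_mul_pos h3 (tendsto_pow_atTop_atTop_of_one_lt hw) h2
  refine h4.congr fun i => ?_
  field_simp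
  ring

theorem main_claim (hv : IsAbsExt Fq v) {x : L Fq} {F : ℕ → Fq[X][X]} {h : ℕ → ℝ} {D β w : ℝ}
    (hw : 4 < w) (hw2 : 0 < w ^ 2 - 5 * w + 2) (hh : Asym w h)
    (hB : ∀ᶠ i in atTop, Blk v x (F i) (h i) (h (i + 1) - 2 * D) β) (I : ℕ) :
    ∃ M : ℕ, ∀ P : Fq[X][X], P.natDegree ≤ 2 → M ≤ ht P →
      (∃ i, I ≤ i ∧ ∃ t : Fq[X], P = C t * F i) ∨
        qp Fq (-((w - 1) * ht P)) ≤ v (evalL Fq P x) := by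
  classical
  have e1 := (hh ((w - 2) / 2 - 1) (-((w - 2) / 2)) (by nlinarith)).eventually_ge_atTop
    ((w - 2) / 2 * (2 * D) + 2 * β)
  have hg := hh 1 (-1) (by linarith)
  obtain ⟨J, hJ⟩ := eventually_atTop.1 (e1.and (hB.and (eventually_ge_atTop I)))
  obtain ⟨M, hM⟩ := exists_nat_ge ((1 * h (J + 1) + -1 * h J - 2 * D) / 2)
  refine ⟨M, fun P hd hP => ?_⟩
  have hP' : (M : ℝ) ≤ ht P := by exact_mod_cast hP
  have hex : ∃ i, J ≤ i ∧ 2 * (ht P : ℝ) < 1 * h (i + 1) + -1 * h i - 2 * D := by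
    obtain ⟨i, hi, hi'⟩ :=
      ((hg.eventually_gt_atTop (2 * (ht P : ℝ) + 2 * D)).and (eventually_ge_atTop J)).exists
    exact ⟨i, hi', by linarith⟩
  obtain ⟨hi1, hi2⟩ := Nat.find_spec hex
  have hmin := fun {k : ℕ} => Nat.find_min hex (m := k)
  set i := Nat.find hex
  have hne : i ≠ J := by
    intro h0
    rw [h0] at hi2
    linarith
  obtain ⟨k, hk⟩ : ∃ k, i = k + 1 := ⟨i - 1, by omega⟩
  have hkmin := hmin (k := k) (by omega)
  have hkJ : J ≤ k := by omega
  have hk2 : 1 * h (k + 1) + -1 * h k - 2 * D ≤ 2 * (ht P : ℝ) := by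
    by_contra! hc
    exact hkmin ⟨hkJ, hc⟩
  obtain ⟨-, hBi, hIi⟩ := hJ i hi1
  obtain ⟨hk3, -, -⟩ := hJ k hkJ
  rcases hBi.approx hv hd (by linarith) with ⟨t, ht⟩ | hlow
  · exact Or.inl ⟨i, hIi, t, ht⟩
  · right
    refine le_trans (qp_le.2 ?_) hlow
    rw [hk]
    nlinarith

theorem finite_ht (M : ℕ) : {P : Fq[X][X] | P.natDegree ≤ 2 ∧ ht P < M}.Finite := by
  have h1 : {p : Fq[X] | p.natDegree < M + 1}.Finite := by
    have : Finite (degreeLT Fq (M + 1)) := Finite.of_equiv _ (degreeLTEquiv Fq (M + 1)).symm.toEquiv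
    refine Set.Finite.subset (Set.toFinite (degreeLT Fq (M + 1) : Set Fq[X])) ?_
    intro p hp
    rw [SetLike.mem_coe, mem_degreeLT]
    exact lt_of_le_of_lt degree_le_natDegree (by exact_mod_cast hp)
  refine ((h1.prod (h1.prod h1)).image fun t => quad Fq t.1 t.2.1 t.2.2).subset ?_
  rintro P ⟨hd, hP⟩
  refine ⟨(P.coeff 2, P.coeff 1, P.coeff 0), ⟨?_, ?_, ?_⟩, (eq_quad hd).symm⟩
  · have := natDegree_coeff_le_ht hd 2
    show (P.coeff 2).natDegree < M + 1
    omega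
  · have := natDegree_coeff_le_ht hd 1
    show (P.coeff 1).natDegree < M + 1
    omega
  · have := natDegree_coeff_le_ht hd 0
    show (P.coeff 0).natDegree < M + 1
    omega

theorem prop_case (hv : IsAbsExt Fq v) {x : L Fq} {F P : Fq[X][X]} {h ε β : ℝ}
    (B : Blk v x F h ε β) {t : Fq[X]} (hP : P = C t * F) (hP0 : P ≠ 0) (hd : P.natDegree ≤ 2) :
    h ≤ ht P ∧ qp Fq (-ε) ≤ v (evalL Fq P x) ∧ ∀ α, evalL Fq P α = 0 → evalL Fq F α = 0 := by
  have ht0 : t ≠ 0 := by rintro rfl; simp at hP; exact hP0 hP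
  have hev : ∀ α, evalL Fq P α = φ Fq t * evalL Fq F α := by
    intro α; rw [hP]; simp [evalL]
  refine ⟨?_, ?_, ?_⟩
  · have h1 := natDegree_coeff_le_ht hd 2
    rw [hP, coeff_C_mul, natDegree_mul ht0 B.c2, ← hP] at h1
    rw [← B.lead]
    exact_mod_cast (by omega : (F.coeff 2).natDegree ≤ ht P)
  · rw [hev, hv.map_mul, B.val]
    have := v_phi_ge hv ht0
    have := qp_pos (Fq := Fq) (-ε)
    nlinarith
  · intro α hα
    rw [hev] at hα
    rcases mul_eq_zero.1 hα with h0 | h0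
    · exact absurd ((map_eq_zero_iff _ (phi_inj hv)).1 h0) ht0
    · exact h0

theorem sSup_eq_real {S : ℝ → Prop} {w : ℝ} (h1 : ∀ s, s < w → S s) (h2 : ∀ s, w < s → ¬ S s) :
    sSup {x : EReal | ∃ s : ℝ, x = (s : EReal) ∧ S s} = (w : EReal) := by
  apply le_antisymm
  · refine sSup_le ?_
    rintro _ ⟨s, rfl, hs⟩
    by_contra! hc
    exact h2 s (EReal.coe_lt_coe_iff.1 hc) hs
  · refine le_of_forall_lt fun y hy => ?_
    obtain ⟨s, hs1, hs2⟩ := EReal.lt_iff_exists_real_btwn.1 hy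
    exact lt_of_lt_of_le hs1 (le_sSup ⟨s, rfl, h1 s (EReal.coe_lt_coe_iff.1 hs2)⟩)

theorem final_w (hv : IsAbsExt Fq v) {ξ : K Fq} {F : ℕ → Fq[X][X]} {h : ℕ → ℝ} {D β w : ℝ}
    (hw : 4 < w) (hw2 : 0 < w ^ 2 - 5 * w + 2) (hh : Asym w h)
    (hB : ∀ᶠ i in atTop, Blk v (toL Fq ξ) (F i) (h i) (h (i + 1) - 2 * D) β) :
    wExp Fq 2 ξ = (w : EReal) := by
  unfold wExp
  refine sSup_eq_real ?_ ?_
  · intro s hs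
    refine Set.Infinite.of_image ht (Set.infinite_of_forall_exists_gt fun M => ?_)
    have e1 := (hh 1 (-s) (by linarith)).eventually_ge_atTop (2 * D)
    have e2 := (hh 0 1 (by linarith)).eventually_gt_atTop (M : ℝ)
    obtain ⟨i, h1, h2, hb⟩ := (e1.and (e2.and hB)).exists
    have h3 := hb.ht_eq hv
    refine ⟨ht (F i), ⟨F i, ⟨hb.deg.le, ?_, ?_⟩, rfl⟩, ?_⟩
    · rw [kabs_evalK hv, hb.val]; exact qp_pos _
    · rw [kabs_evalK hv, hb.val, Hpoly_eq hv hb.irr.ne_zero hb.deg.le, h3, qp_rpow, qp_le]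
      linarith
    · have : (M : ℝ) < ht (F i) := by rw [h3]; linarith
      exact_mod_cast this
  · intro s hs hinf
    have e1 := (hh (-1) s (by linarith)).eventually_gt_atTop (-2 * D)
    obtain ⟨I, hI⟩ := eventually_atTop.1 (e1.and hB)
    obtain ⟨M, hM⟩ := main_claim hv hw hw2 hh hB I
    refine hinf ((finite_ht (Fq := Fq) (M + 1)).subset ?_)
    rintro P ⟨hd, hpos, hle⟩
    refine ⟨hd, ?_⟩
    by_contra! hge
    have hP0 : P ≠ 0 := by
      rintro rfl
      rw [kabs_evalK hv] at hpos
      simp [evalL, v_zero hv] at hpos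
    have hH : (1 : ℝ) ≤ ht P := by exact_mod_cast (by omega : 1 ≤ ht P)
    rw [kabs_evalK hv, Hpoly_eq hv hP0 hd, qp_rpow] at hle
    rcases hM P hd (by omega) with ⟨i, hi, t, hPt⟩ | hlow
    · obtain ⟨hi1, hi2⟩ := hI i hi
      obtain ⟨c1, c2, -⟩ := prop_case hv hi2 hPt hP0 hd
      have := qp_le.1 (c2.trans hle)
      nlinarith
    · have := qp_le.1 (hlow.trans hle)
      nlinarith

theorem final_wstar (hv : IsAbsExt Fq v) {ξ : K Fq} {F : ℕ → Fq[X][X]} {h : ℕ → ℝ} {D β w : ℝ}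
    (hw : 4 < w) (hw2 : 0 < w ^ 2 - 5 * w + 2) (hh : Asym w h)
    (hB : ∀ᶠ i in atTop, Blk v (toL Fq ξ) (F i) (h i) (h (i + 1) - 2 * D) β) :
    wStarExp Fq v 2 ξ = ((w - 1 : ℝ) : EReal) := by
  unfold wStarExp
  refine sSup_eq_real ?_ ?_
  · intro s hs
    refine Set.Infinite.of_image (fun α => ht (minPolyPrim Fq α))
      (Set.infinite_of_forall_exists_gt fun M => ?_)
    have e1 := (hh 1 (-(s + 1)) (by linarith)).eventually_ge_atTop (2 * D - β)
    have e2 := (hh 0 1 (by linarith)).eventually_gt_atTop (M : ℝ)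
    obtain ⟨i, h1, h2, hb⟩ := (e1.and (e2.and hB)).exists
    obtain ⟨α, hα, hpos, hle⟩ := hb.root_exists hv
    obtain ⟨k1, k2, k3, k4⟩ := hb.isMin hv hα
    refine ⟨ht (minPolyPrim Fq α), ⟨α, ⟨k1, k2.le, hpos, ?_⟩, rfl⟩, ?_⟩
    · rw [k3, qp_rpow]
      refine hle.trans (qp_le.2 ?_)
      linarith
    · have : (M : ℝ) < ht (minPolyPrim Fq α) := by rw [k4]; linarith
      exact_mod_cast this
  · intro s hs hinf
    have e1 := (hh (-1) (s + 1) (by linarith)).eventually_gt_atTop (-2 * D + β)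
    obtain ⟨I, hI⟩ := eventually_atTop.1 (e1.and hB)
    obtain ⟨M, hM⟩ := main_claim hv hw hw2 hh hB I
    refine hinf (((finite_ht (Fq := Fq) (M + 1)).biUnion
      (t := fun P => {α : L Fq | P ≠ 0 ∧ evalL Fq P α = 0}) ?_).subset ?_)
    · intro P _
      by_cases hP0 : P = 0
      · simp [hP0]
      · have hm : P.map (φ Fq) ≠ 0 := by
          rwa [Ne, Polynomial.map_eq_zero_iff (phi_inj hv)]
        refine (finite_setOfPred_isRoot hm).subset ?_
        rintro α ⟨-, hα⟩
        show eval α (P.map (φ Fq)) = 0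
        rw [eval_map]; exact hα
    · rintro α ⟨halg, hdeg, hpos, hle⟩
      obtain ⟨g1, g2, g3, g4, hroot⟩ := minPoly_spec halg
      unfold degAlg at hdeg
      unfold heightAlg at hle
      set P := minPolyPrim Fq α
      have hP0 : P ≠ 0 := g2.ne_zero
      refine Set.mem_biUnion (x := P) ⟨hdeg, ?_⟩ ⟨hP0, hroot⟩
      by_contra! hge
      have hH : (1 : ℝ) ≤ ht P := by exact_mod_cast (by omega : 1 ≤ ht P)
      have hx : v (toL Fq ξ) ≤ 1 := (hI I le_rfl).2.hx
      rw [Hpoly_eq hv hP0 hdeg, qp_rpow] at hle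
      rcases hM P hdeg (by omega) with ⟨i, hi, t, hPt⟩ | hlow
      · obtain ⟨hi1, hi2⟩ := hI i hi
        obtain ⟨c1, -, c3⟩ := prop_case hv hi2 hPt hP0 hdeg
        have hh0 : 0 ≤ h i := hi2.hβ.trans hi2.hβh
        have h5 : v (toL Fq ξ - α) ≤ qp Fq (-h i) := hle.trans (qp_le.2 (by nlinarith))
        have h6 := hi2.root_lower hv (c3 α hroot) h5
        have h7 := h6.trans (mul_le_mul_of_nonneg_right hle (qp_pos β).le)
        rw [qp_mul, qp_le] at h7
        nlinarith
      · have h5 : v (toL Fq ξ - α) ≤ 1 := by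
          rw [← qp_zero (Fq := Fq)]
          exact hle.trans (qp_le.2 (by nlinarith))
        have h6 := hlow.trans (general_upper hv hdeg hx hroot h5)
        have h7 := h6.trans (mul_le_mul_of_nonneg_right hle (qp_pos _).le)
        rw [qp_mul, qp_le] at h7
        nlinarith

theorem floor_gap {w : ℝ} (hw : 4 < w) (i : ℕ) : ⌊w ^ i⌋₊ + 2 ≤ ⌊w ^ (i + 1)⌋₊ := by
  have h1 : (1 : ℝ) ≤ w ^ i := one_le_pow₀ (by linarith)
  have h2 : w ^ (i + 1) = w ^ i * w := pow_succ _ _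
  have h3 : (⌊w ^ i⌋₊ : ℝ) ≤ w ^ i := Nat.floor_le (by linarith)
  refine Nat.le_floor ?_
  push_cast
  nlinarith

theorem floor_mono {w : ℝ} (hw : 4 < w) : StrictMono fun i : ℕ => ⌊w ^ i⌋₊ :=
  strictMono_nat_of_lt_succ fun i => by have := floor_gap hw i; omega

theorem floor_int {w : ℝ} (hw : 4 < w) (n i : ℕ) : (n : ℤ) = ⌊w ^ i⌋ ↔ n = ⌊w ^ i⌋₊ := by
  have : (⌊w ^ i⌋₊ : ℤ) = ⌊w ^ i⌋ := Int.natCast_floor_eq_floor (by positivity)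
  rw [← this]; exact Nat.cast_inj

theorem dg_block {a : ℕ → Fq[X]} (h : ∀ n, 1 ≤ n → 1 ≤ (a n).natDegree) {b : Fq[X]} {m : ℕ}
    (j : ℕ) (hb : ∀ i, i < j → a (m + i + 1) = b) :
    dg a (m + j + 1) = dg a (m + 1) + j * b.natDegree := by
  induction j with
  | zero => simp
  | succ j ih =>
    have h1 := ih fun i hi => hb i (by omega)
    have h2 := (q_aux a h (m + j)).2.2
    rw [hb j (by omega)] at h2
    change dg a (m + j + 2) = _ + dg a (m + j + 1) at h2
    rw [show m + (j + 1) + 1 = m + j + 2 by ring, h2, h1]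
    ring

theorem blocks (hv : IsAbsExt Fq v) {w : ℝ} (hw : 4 < w)
    {b c : Fq[X]} (hbc : b ≠ c) (hb : 1 ≤ b.natDegree) (hc : 1 ≤ c.natDegree)
    {a : ℕ → Fq[X]} (ha0 : a 0 = 0)
    (hac : ∀ n : ℕ, 1 ≤ n → (∃ i : ℕ, (n : ℤ) = ⌊w ^ i⌋) → a n = c)
    (hab : ∀ n : ℕ, 1 ≤ n → (¬ ∃ i : ℕ, (n : ℤ) = ⌊w ^ i⌋) → a n = b)
    {ξ : K Fq} (hξ : IsCFOf Fq ξ a) :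
    ∃ (F : ℕ → Fq[X][X]) (h : ℕ → ℝ), Asym w h ∧
      ∀ᶠ i in atTop, Blk v (toL Fq ξ) (F i) (h i) (h (i + 1) - 2 * (b - c).natDegree)
        b.natDegree := by
  set n : ℕ → ℕ := fun i => ⌊w ^ i⌋₊ with hn
  have hgap : ∀ i, n i + 2 ≤ n (i + 1) := floor_gap hw
  have hmono : StrictMono n := floor_mono hw
  have hn0 : n 0 = 1 := by simp [hn]
  have hn1 : ∀ i, 1 ≤ n i := fun i => by rw [← hn0]; exact hmono.monotone (Nat.zero_le i)
  have hac' : ∀ i, a (n i) = c := fun i =>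
    hac _ (hn1 i) ⟨i, (floor_int hw _ _).2 rfl⟩
  have hab' : ∀ i k, n i < k → k < n (i + 1) → a k = b := by
    intro i k h1 h2
    refine hab k (by omega) ?_
    rintro ⟨j, hj⟩
    have hj' : k = n j := (floor_int hw _ _).1 hj
    rw [hj'] at h1 h2
    have := hmono.lt_iff_lt.1 h1
    have := hmono.lt_iff_lt.1 h2
    omega
  have hlen : ∀ i, ∃ j, 1 ≤ j ∧ n (i + 1) = n i + j + 1 := fun i =>
    ⟨n (i + 1) - n i - 1, by have := hgap i; omega, by have := hgap i; omega⟩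
  have hd1 : ∀ i, dg a (n i + 1) = c.natDegree + dg a (n i) := by
    intro i
    obtain ⟨k, hk⟩ := Nat.exists_eq_add_of_le' (hn1 i)
    have := (q_aux a hξ.1 k).2.2
    rw [← hk, hac' i] at this
    change (qSeq Fq a (n i + 1)).natDegree = c.natDegree + (qSeq Fq a (n i)).natDegree
    rw [← this, hk]
  have hdg : ∀ i, (dg a (n i + 1) : ℝ) = n i * b.natDegree +
      (i + 1) * ((c.natDegree : ℝ) - b.natDegree) := by
    intro i
    induction i with
    | zero =>
      rw [hd1, hn0]
      simp [dg, qSeq]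
    | succ i ih =>
      obtain ⟨j, hj1, hj⟩ := hlen i
      have h1 := dg_block hξ.1 (b := b) (m := n i) j
        (fun k hk => hab' i _ (by omega) (by omega))
      rw [hd1, hj, h1]
      push_cast
      rw [ih]
      ring
  let h : ℕ → ℝ := fun i => (b - c).natDegree + dg a (n i) + dg a (n i + 1)
  have hh : ∀ i, h i = ((b - c).natDegree - c.natDegree + 2 * ((c.natDegree : ℝ) - b.natDegree)) +
      2 * b.natDegree * n i + 2 * ((c.natDegree : ℝ) - b.natDegree) * i := by
    intro i
    have h1 : (dg a (n i + 1) : ℝ) = c.natDegree + dg a (n i) := by exact_mod_cast hd1 i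
    have h2 := hdg i
    show ((b - c).natDegree : ℝ) + dg a (n i) + dg a (n i + 1) = _
    linear_combination (-1 : ℝ) * h1 + 2 * h2
  have hb1 : (1 : ℝ) ≤ b.natDegree := by exact_mod_cast hb
  have hasym : Asym w h := by
    refine asym_of_tendsto (by linarith) (G := 2 * b.natDegree) (by linarith) ?_
    have hwi : Tendsto (fun i : ℕ => w ^ i) atTop atTop :=
      tendsto_pow_atTop_atTop_of_one_lt (by linarith)
    have t1 : Tendsto (fun i : ℕ => (n i : ℝ) / w ^ i) atTop (nhds 1) :=
      tendsto_nat_floor_div_atTop.comp hwi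
    have t2 : Tendsto (fun i : ℕ => (i : ℝ) / w ^ i) atTop (nhds 0) := by
      have := tendsto_pow_const_div_const_pow_of_one_lt 1 (r := w) (by linarith)
      simpa using this
    have t3 : ∀ C0 : ℝ, Tendsto (fun i : ℕ => C0 / w ^ i) atTop (nhds 0) := fun C0 =>
      hwi.const_div_atTop C0
    have t4 := ((t3 ((b - c).natDegree - c.natDegree +
      2 * ((c.natDegree : ℝ) - b.natDegree))).add (t1.const_mul (2 * (b.natDegree : ℝ)))).add
      (t2.const_mul (2 * ((c.natDegree : ℝ) - b.natDegree)))
    have e : 0 + 2 * (b.natDegree : ℝ) * 1 + 2 * ((c.natDegree : ℝ) - b.natDegree) * 0 =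
      2 * b.natDegree := by ring
    rw [e] at t4
    refine t4.congr fun i => ?_
    rw [hh]; ring
  refine ⟨fun i => PP b (qSeq Fq a (n i)) (pSeq Fq a (n i)) (qSeq Fq a (n i + 1))
    (pSeq Fq a (n i + 1)), h, hasym, ?_⟩
  have e1 := (hasym 0 1 (by linarith)).eventually_ge_atTop (b.natDegree : ℝ)
  have e2 := (hasym 1 0 (by linarith)).eventually_ge_atTop (2 * ((b - c).natDegree : ℝ))
  filter_upwards [e1, e2] with i hi1 hi2
  obtain ⟨j, hj1, hj⟩ := hlen i
  have hdet := det_one a (n i)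
  have hdeg := PP_natDegree hb hdet
  exact
    { deg := hdeg
      irr := PP_irreducible hb hdet
      prim := PP_primitive hdet
      res := by
        intro A' B' D' h0
        unfold PP at h0 ⊢
        rw [quad_coeff2, quad_coeff1, quad_coeff0] at *
        exact res_zero hb hdet h0
      lead := by
        unfold PP
        rw [quad_coeff2, natDegree_cA hv hξ.1 hb hbc (hn1 i) (hac' i)]
        push_cast
        rfl
      der := by
        unfold PP fder
        rw [quad_coeff2, quad_coeff1]
        exact v_ff hv hξ hb (hn1 i) (hab' i _ (by omega) (by omega))
      val := by
        rw [evalL_quad _ hdeg.le]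
        unfold PP
        rw [quad_coeff2, quad_coeff1, quad_coeff0, Qf_eq,
          ← v_Qf_step hv j (fun k hk => hab' i _ (by omega) (by omega)),
          v_Qf hv hξ hbc (by rw [← hj]; exact hac' (i + 1))]
        congr 1
        show _ = -(((b - c).natDegree : ℝ) + dg a (n (i + 1)) + dg a (n (i + 1) + 1) -
          2 * (b - c).natDegree)
        rw [hj]
        ring
      hβ := by linarith
      hβh := by linarith
      hε := by linarith
      hx := by
        have h1 := v_EE hv hξ 1
        have h2 : EE a ξ 1 = toL Fq ξ := by simp [EE, qSeq, pSeq, ha0]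
        rw [← h2, h1, ← qp_zero (Fq := Fq), qp_le]
        simp }

end Helpers

theorem stmt0 (Fq : Type) [Field Fq] [Fintype Fq]
    (v : L Fq → ℝ) (hv : IsAbsExt Fq v) (w : ℝ)
    (hw1 : ringChar Fq ≠ 2 → (5 + Real.sqrt 17) / 2 < w)
    (hw2 : ringChar Fq = 2 → (9 + Real.sqrt 65) / 2 < w)
    (b c : Polynomial Fq) (hbc : b ≠ c) (hb : 1 ≤ b.natDegree) (hc : 1 ≤ c.natDegree)
    (a : ℕ → Polynomial Fq) (ha0 : a 0 = 0)
    (hac : ∀ n : ℕ, 1 ≤ n → (∃ i : ℕ, (n : ℤ) = ⌊w ^ i⌋) → a n = c)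
    (hab : ∀ n : ℕ, 1 ≤ n → (¬ ∃ i : ℕ, (n : ℤ) = ⌊w ^ i⌋) → a n = b)
    (ξ : K Fq) (hξ : IsCFOf Fq ξ a) :
    wStarExp Fq v 2 ξ = ((w - 1 : ℝ) : EReal) ∧ wExp Fq 2 ξ = ((w : ℝ) : EReal) := by
  have hw : 4 < w ∧ 0 < w ^ 2 - 5 * w + 2 := by
    by_cases h : ringChar Fq = 2
    · have h1 := hw2 h
      have h2 : (8 : ℝ) ≤ Real.sqrt 65 := Real.le_sqrt_of_sq_le (by norm_num)
      have h3 : 8 < w := by linarith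
      exact ⟨by linarith, by nlinarith⟩
    · have h1 := hw1 h
      have h2 : (4 : ℝ) ≤ Real.sqrt 17 := Real.le_sqrt_of_sq_le (by norm_num)
      have h3 : Real.sqrt 17 ^ 2 = 17 := Real.sq_sqrt (by norm_num)
      exact ⟨by linarith, by nlinarith⟩
  obtain ⟨F, h, hasym, hB⟩ := blocks hv hw.1 hbc hb hc ha0 hac hab hξ
  exact ⟨final_wstar hv hw.1 hw.2 hasym hB, final_w hv hw.1 hw.2 hasym hB⟩

end Ooto
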